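/- arXiv:1505.02978 — 3 statements merged into one kernel-verified Lean document; each statement's English description precedes it below -/
import Mathlib

section
/- Let γ : ℝ → ℝ² be a smooth regular plane curve parametrised by arc length with curvature κ, and let V ∈ ℝ² satisfy −κ''(s) = ⟨V, ν(s)⟩ for all s. Suppose that for all sequences (p_i) with p_i → −∞ and (q_i) with q_i → +∞, one has (κ(q_i)κ'(q_i) + ⟨V, γ'(q_i)⟩) − (κ(p_i)κ'(p_i) + ⟨V, γ'(p_i)⟩) → 0 as i → ∞. Then κ' ≡ 0, i.e. κ is constant; if moreover γ is not periodic (there is no P > 0 with γ(s+P) = γ(s) for all s), then γ is a straight line: γ(s) = γ(0) + s γ'(0). -/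
open Real MeasureTheory Filter

/-- Euclidean inner product on `ℝ × ℝ`. -/
def innerP (a b : ℝ × ℝ) : ℝ := a.1 * b.1 + a.2 * b.2

/-- Unit normal `ν = (y', -x')` of a plane curve parametrised by arc length. -/
noncomputable def nuA (γ : ℝ → ℝ × ℝ) (s : ℝ) : ℝ × ℝ :=
  ((deriv γ s).2, -(deriv γ s).1)

/-- Curvature `κ = ⟨γ'', ν⟩` of a plane curve parametrised by arc length. -/
noncomputable def curvA (γ : ℝ → ℝ × ℝ) (s : ℝ) : ℝ :=
  innerP (deriv (deriv γ) s) (nuA γ s)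

/-- A function on `ℝ` with nonnegative derivative whose total increment vanishes along symmetric
intervals has zero derivative. -/
theorem eq_zero_of_hasDerivAt_nonneg_of_tendsto {f g : ℝ → ℝ} (hf : ∀ s, HasDerivAt f (g s) s)
    (hg : ∀ s, 0 ≤ g s)
    (hlim : Tendsto (fun n : ℕ => f n - f (-n)) atTop (nhds 0)) (s : ℝ) : g s = 0 := by
  have hmono : Monotone f :=
    monotone_of_deriv_nonneg (fun t => (hf t).differentiableAt)
      (fun t => by rw [(hf t).deriv]; exact hg t)
  have hle : ∀ a b, f b - f a ≤ 0 := by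
    intro a b
    refine ge_of_tendsto hlim ?_
    obtain ⟨N, hN⟩ := exists_nat_ge (max |a| |b|)
    filter_upwards [eventually_ge_atTop N] with n hn
    have hn' : (N : ℝ) ≤ n := by exact_mod_cast hn
    have ha : -(n : ℝ) ≤ a := by
      linarith [neg_abs_le a, le_max_left |a| |b|]
    have hb : b ≤ n := by
      linarith [le_abs_self b, le_max_right |a| |b|]
    linarith [hmono ha, hmono hb]
  have hconst : f = fun _ => f 0 :=
    funext fun t => le_antisymm (by linarith [hle 0 t]) (by linarith [hle t 0])
  have h := hf s
  rw [hconst] at h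
  exact h.unique (hasDerivAt_const s (f 0))

/-- A function on `ℝ` with zero derivative is constant. -/
theorem eq_of_hasDerivAt_zero {f : ℝ → ℝ} (hf : ∀ s, HasDerivAt f 0 s) (s t : ℝ) : f s = f t :=
  is_const_of_deriv_eq_zero (fun t => (hf t).differentiableAt) (fun t => (hf t).deriv) s t

/-- Solutions of the planar rotation system `u' = c v`, `v' = -c u`. -/
theorem eq_cos_sin_of_rotation {u v : ℝ → ℝ} {c : ℝ} (hu : ∀ s, HasDerivAt u (c * v s) s)
    (hv : ∀ s, HasDerivAt v (-(c * u s)) s) (s : ℝ) :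
    u s = u 0 * cos (c * s) + v 0 * sin (c * s) ∧
      v s = v 0 * cos (c * s) - u 0 * sin (c * s) := by
  have hlin : ∀ t, HasDerivAt (fun t : ℝ => c * t) c t := fun t => by
    simpa using (hasDerivAt_id t).const_mul c
  have h₁ : ∀ t, HasDerivAt (fun t => u t * cos (c * t) - v t * sin (c * t)) 0 t := fun t =>
    (((hu t).mul (hlin t).cos).sub ((hv t).mul (hlin t).sin)).congr_deriv (by ring)
  have h₂ : ∀ t, HasDerivAt (fun t => u t * sin (c * t) + v t * cos (c * t)) 0 t := fun t =>
    (((hu t).mul (hlin t).sin).add ((hv t).mul (hlin t).cos)).congr_deriv (by ring)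
  have e₁ := eq_of_hasDerivAt_zero h₁ s 0
  have e₂ := eq_of_hasDerivAt_zero h₂ s 0
  simp only [mul_zero, cos_zero, sin_zero, mul_one, sub_zero, zero_add] at e₁ e₂
  have hcs := sin_sq_add_cos_sq (c * s)
  rw [← e₁, ← e₂]
  constructor
  · linear_combination (-u s) * hcs
  · linear_combination (-v s) * hcs

/-- Solutions of the planar rotation system with nonzero angular velocity `c` are periodic with
period `2 π / c`. -/
theorem periodic_of_rotation {u v : ℝ → ℝ} {c : ℝ} (hc : c ≠ 0)
    (hu : ∀ s, HasDerivAt u (c * v s) s) (hv : ∀ s, HasDerivAt v (-(c * u s)) s) :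
    Function.Periodic u (2 * π / c) ∧ Function.Periodic v (2 * π / c) := by
  have hshift : ∀ s, c * (s + 2 * π / c) = c * s + 2 * π := fun s => by field_simp
  constructor <;> intro s
  · rw [(eq_cos_sin_of_rotation hu hv _).1, (eq_cos_sin_of_rotation hu hv s).1, hshift,
      cos_add_two_pi, sin_add_two_pi]
  · rw [(eq_cos_sin_of_rotation hu hv _).2, (eq_cos_sin_of_rotation hu hv s).2, hshift,
      cos_add_two_pi, sin_add_two_pi]

/-- Frenet equations `γ'' = κ ν` for a plane curve parametrised by arc length. -/
theorem hasDerivAt_deriv_of_unit_speed {γ : ℝ → ℝ × ℝ} (hd : Differentiable ℝ (deriv γ))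
    (hunit : ∀ s, (deriv γ s).1 ^ 2 + (deriv γ s).2 ^ 2 = 1) (s : ℝ) :
    HasDerivAt (fun s => (deriv γ s).1) (curvA γ s * (deriv γ s).2) s ∧
      HasDerivAt (fun s => (deriv γ s).2) (-(curvA γ s * (deriv γ s).1)) s := by
  have h₁ : HasDerivAt (fun s => (deriv γ s).1) (deriv (deriv γ) s).1 s :=
    (hd s).hasDerivAt.fst
  have h₂ : HasDerivAt (fun s => (deriv γ s).2) (deriv (deriv γ) s).2 s :=
    (hd s).hasDerivAt.snd
  have horth := ((h₁.pow 2).add (h₂.pow 2)).unique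
    ((hasDerivAt_const s (1 : ℝ)).congr_of_eventuallyEq (Eventually.of_forall hunit))
  simp only [Nat.cast_ofNat, Nat.add_one_sub_one, pow_one] at horth
  refine ⟨h₁.congr_deriv ?_, h₂.congr_deriv ?_⟩ <;> simp only [curvA, nuA, innerP]
  · linear_combination (-(deriv (deriv γ) s).1) * hunit s + (deriv γ s).1 / 2 * horth
  · linear_combination (-(deriv (deriv γ) s).2) * hunit s + (deriv γ s).2 / 2 * horth

/-- The curvature of a smooth plane curve is smooth. -/
theorem contDiff_curvA {γ : ℝ → ℝ × ℝ} (hsmooth : ContDiff ℝ (⊤ : ℕ∞) γ) :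
    ContDiff ℝ (⊤ : ℕ∞) (curvA γ) := by
  have h₁ : ContDiff ℝ (⊤ : ℕ∞) (deriv γ) := (contDiff_infty_iff_deriv.1 hsmooth).2
  have h₂ : ContDiff ℝ (⊤ : ℕ∞) (deriv (deriv γ)) := (contDiff_infty_iff_deriv.1 h₁).2
  unfold curvA nuA innerP
  fun_prop

/-- an open translator for the curve diffusion flow satisfying the decay
condition at infinity has constant curvature; if moreover it is not periodic,
it is a straight line. -/
theorem open_translator_with_decay
    (γ : ℝ → ℝ × ℝ)
    (hsmooth : ContDiff ℝ (⊤ : ℕ∞) γ)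
    (hunit : ∀ s, (deriv γ s).1 ^ 2 + (deriv γ s).2 ^ 2 = 1)
    (V : ℝ × ℝ)
    (htrans : ∀ s, -(deriv (deriv (curvA γ)) s) = innerP V (nuA γ s))
    (hdecay : ∀ p q : ℕ → ℝ, Filter.Tendsto p Filter.atTop Filter.atBot →
      Filter.Tendsto q Filter.atTop Filter.atTop →
      Filter.Tendsto (fun i =>
        (curvA γ (q i) * deriv (curvA γ) (q i) + innerP V (deriv γ (q i)))
          - (curvA γ (p i) * deriv (curvA γ) (p i) + innerP V (deriv γ (p i))))
        Filter.atTop (nhds 0)) :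
    (∀ s, deriv (curvA γ) s = 0) ∧
      ((¬ ∃ P : ℝ, 0 < P ∧ ∀ s, γ (s + P) = γ s) →
        ∀ s, γ s = γ 0 + s • deriv γ 0) := by
  have hT : ContDiff ℝ (⊤ : ℕ∞) (deriv γ) := (contDiff_infty_iff_deriv.1 hsmooth).2
  have hγ : ∀ s, HasDerivAt γ (deriv γ s) s := fun s =>
    ((contDiff_infty_iff_deriv.1 hsmooth).1 s).hasDerivAt
  have hfrenet := hasDerivAt_deriv_of_unit_speed (contDiff_infty_iff_deriv.1 hT).1 hunit
  obtain ⟨hκd, hκ'⟩ := contDiff_infty_iff_deriv.1 (contDiff_curvA hsmooth)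
  have hκ'd := (contDiff_infty_iff_deriv.1 hκ').1
  have hflux : ∀ s, HasDerivAt
      (fun s => curvA γ s * deriv (curvA γ) s + innerP V (deriv γ s))
      (deriv (curvA γ) s ^ 2) s := by
    intro s
    refine (((hκd s).hasDerivAt.mul (hκ'd s).hasDerivAt).add
      (((hfrenet s).1.const_mul V.1).add ((hfrenet s).2.const_mul V.2))).congr_deriv ?_
    have h := htrans s
    simp only [innerP, nuA] at h
    linear_combination (-curvA γ s) * h
  have hzero : ∀ s, deriv (curvA γ) s = 0 := fun s =>
    pow_eq_zero_iff two_ne_zero |>.1 <|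
      eq_zero_of_hasDerivAt_nonneg_of_tendsto hflux (fun s => sq_nonneg _)
        (hdecay (fun n => -n) (fun n => n)
          (tendsto_neg_atTop_atBot.comp tendsto_natCast_atTop_atTop)
          tendsto_natCast_atTop_atTop) s
  refine ⟨hzero, fun hper s => ?_⟩
  have hcurv : ∀ s, curvA γ s = curvA γ 0 := fun s => is_const_of_deriv_eq_zero hκd hzero s 0
  generalize curvA γ 0 = c at hcurv
  simp only [hcurv] at hfrenet
  have hx : ∀ s, HasDerivAt (fun s => (γ s).1) (deriv γ s).1 s := fun s => (hγ s).fst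
  have hy : ∀ s, HasDerivAt (fun s => (γ s).2) (deriv γ s).2 s := fun s => (hγ s).snd
  have hc : c = 0 := by
    by_contra hc
    obtain ⟨hp₁, hp₂⟩ := periodic_of_rotation hc (fun s => (hfrenet s).1) (fun s => (hfrenet s).2)
    have e₁ : ∀ s t, (deriv γ s).1 - c * (γ s).2 = (deriv γ t).1 - c * (γ t).2 :=
      eq_of_hasDerivAt_zero fun s =>
        ((hfrenet s).1.sub ((hy s).const_mul c)).congr_deriv (by ring)
    have e₂ : ∀ s t, (deriv γ s).2 + c * (γ s).1 = (deriv γ t).2 + c * (γ t).1 :=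
      eq_of_hasDerivAt_zero fun s =>
        ((hfrenet s).2.add ((hx s).const_mul c)).congr_deriv (by ring)
    have hγper : Function.Periodic γ (2 * π / c) := by
      intro s
      have p₁ := hp₁ s
      have p₂ := hp₂ s
      refine Prod.ext (mul_left_cancel₀ hc ?_) (mul_left_cancel₀ hc ?_)
      · linear_combination e₂ (s + 2 * π / c) s - p₂
      · linear_combination p₁ - e₁ (s + 2 * π / c) s
    rcases lt_or_gt_of_ne hc with h | h
    · exact hper ⟨-(2 * π / c), neg_pos.2 (div_neg_of_pos_of_neg two_pi_pos h), hγper.neg⟩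
    · exact hper ⟨2 * π / c, div_pos two_pi_pos h, hγper⟩
  subst hc
  simp only [zero_mul, neg_zero] at hfrenet
  have hT₁ : ∀ s, (deriv γ s).1 = (deriv γ 0).1 := fun s =>
    eq_of_hasDerivAt_zero (fun s => (hfrenet s).1) s 0
  have hT₂ : ∀ s, (deriv γ s).2 = (deriv γ 0).2 := fun s =>
    eq_of_hasDerivAt_zero (fun s => (hfrenet s).2) s 0
  have l₁ : (γ s).1 - s * (deriv γ 0).1 = (γ 0).1 - 0 * (deriv γ 0).1 :=
    eq_of_hasDerivAt_zero (f := fun s => (γ s).1 - s * (deriv γ 0).1) (fun s =>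
      ((hx s).sub ((hasDerivAt_id s).mul_const _)).congr_deriv (by rw [hT₁ s]; ring)) s 0
  have l₂ : (γ s).2 - s * (deriv γ 0).2 = (γ 0).2 - 0 * (deriv γ 0).2 :=
    eq_of_hasDerivAt_zero (f := fun s => (γ s).2 - s * (deriv γ 0).2) (fun s =>
      ((hy s).sub ((hasDerivAt_id s).mul_const _)).congr_deriv (by rw [hT₂ s]; ring)) s 0
  refine Prod.ext ?_ ?_ <;>
    simp only [Prod.fst_add, Prod.snd_add, Prod.smul_fst, Prod.smul_snd, smul_eq_mul]
  · linear_combination l₁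
  · linear_combination l₂
end

section
/- Let γ : ℝ → ℝ² be a smooth closed regular plane curve parametrised by arc length with period L > 0, and let S ∈ ℝ be a constant such that −κ''(s) = 2S ⟨γ'(s), γ(s)⟩ for all s ∈ ℝ (γ is a rotator for the curve diffusion flow). Then γ is a round circle: there exist c ∈ ℝ² and R > 0 with ‖γ(s) − c‖ = R for all s. -/
open Real MeasureTheory Filter

/-- The derivative of a periodic function is periodic. -/
lemma periodic_deriv {E : Type*} [NormedAddCommGroup E] [NormedSpace ℝ E] {f : ℝ → E} {L : ℝ}
    (hf : Function.Periodic f L) : Function.Periodic (deriv f) L := by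
  intro s
  rw [← deriv_comp_add_const, funext hf]

/-- A periodic function with nonnegative derivative has vanishing derivative. -/
lemma deriv_eq_zero_of_periodic_of_nonneg {F F' : ℝ → ℝ} {L : ℝ} (hL : 0 < L)
    (hper : Function.Periodic F L) (hF : ∀ s, HasDerivAt F (F' s) s) (hnonneg : ∀ s, 0 ≤ F' s)
    (s : ℝ) : F' s = 0 := by
  have hmono : Monotone F := monotone_of_hasDerivAt_nonneg hF hnonneg
  have hle : ∀ t u, F u ≤ F t := fun t u ↦ by
    obtain ⟨v, hv, htv⟩ := hper.exists_mem_Ico hL t u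
    exact (hmono hv.1).trans_eq htv.symm
  have hconst : F = fun _ ↦ F 0 := funext fun t ↦ le_antisymm (hle 0 t) (hle t 0)
  exact (hF s).unique (hconst ▸ hasDerivAt_const s (F 0))

/-- a smooth closed rotator for the curve diffusion flow
(`−κ'' = 2S ⟨γ', γ⟩`) is a round circle. -/
theorem closed_rotator_is_circle
    (γ : ℝ → ℝ × ℝ) (L : ℝ) (hL : 0 < L)
    (hsmooth : ContDiff ℝ (⊤ : ℕ∞) γ)
    (hunit : ∀ s, (deriv γ s).1 ^ 2 + (deriv γ s).2 ^ 2 = 1)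
    (hper : ∀ s, γ (s + L) = γ s)
    (S : ℝ)
    (hrot : ∀ s, -(deriv (deriv (curvA γ)) s) = 2 * S * innerP (deriv γ s) (γ s)) :
    ∃ c : ℝ × ℝ, ∃ R : ℝ, 0 < R ∧
      ∀ s, Real.sqrt (((γ s).1 - c.1) ^ 2 + ((γ s).2 - c.2) ^ 2) = R := by
  have hsmooth' : ContDiff ℝ (⊤ : ℕ∞) (deriv γ) := (contDiff_infty_iff_deriv.1 hsmooth).2
  have hsmooth'' : ContDiff ℝ (⊤ : ℕ∞) (deriv (deriv γ)) := (contDiff_infty_iff_deriv.1 hsmooth').2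
  have hκ : ContDiff ℝ (⊤ : ℕ∞) (curvA γ) := by
    unfold curvA innerP nuA
    fun_prop
  have hκ' : ContDiff ℝ (⊤ : ℕ∞) (deriv (curvA γ)) := (contDiff_infty_iff_deriv.1 hκ).2
  have hderiv {E : Type} [NormedAddCommGroup E] [NormedSpace ℝ E] {f : ℝ → E}
      (hf : ContDiff ℝ (⊤ : ℕ∞) f) (s : ℝ) : HasDerivAt f (deriv f s) s :=
    (hf.differentiable (by simp) s).hasDerivAt
  have dx (s) : HasDerivAt (fun t ↦ (γ t).1) (deriv γ s).1 s := (hderiv hsmooth s).fst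
  have dy (s) : HasDerivAt (fun t ↦ (γ t).2) (deriv γ s).2 s := (hderiv hsmooth s).snd
  have dx₀ (s) : HasDerivAt (fun t ↦ (deriv γ t).1) (deriv (deriv γ) s).1 s :=
    (hderiv hsmooth' s).fst
  have dy₀ (s) : HasDerivAt (fun t ↦ (deriv γ t).2) (deriv (deriv γ) s).2 s :=
    (hderiv hsmooth' s).snd
  have horth (s) : (deriv γ s).1 * (deriv (deriv γ) s).1
      + (deriv γ s).2 * (deriv (deriv γ) s).2 = 0 := by
    have h := ((dx₀ s).pow 2).add ((dy₀ s).pow 2)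
    have h0 := h.unique ((hasDerivAt_const s (1 : ℝ)).congr_of_eventuallyEq
      (Eventually.of_forall hunit))
    norm_num at h0
    linarith
  -- Frenet equations
  have dx' (s) : HasDerivAt (fun t ↦ (deriv γ t).1) (curvA γ s * (deriv γ s).2) s := by
    convert dx₀ s using 1
    simp only [curvA, innerP, nuA]
    linear_combination (deriv (deriv γ) s).1 * hunit s - (deriv γ s).1 * horth s
  have dy' (s) : HasDerivAt (fun t ↦ (deriv γ t).2) (-(curvA γ s * (deriv γ s).1)) s := by
    convert dy₀ s using 1
    simp only [curvA, innerP, nuA]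
    linear_combination (deriv (deriv γ) s).2 * hunit s - (deriv γ s).2 * horth s
  have hperγ' : Function.Periodic (deriv γ) L := periodic_deriv hper
  have hperκ : Function.Periodic (curvA γ) L := fun s ↦ by
    simp only [curvA, nuA, periodic_deriv hperγ' s, hperγ' s]
  have hκ'_zero (s) : deriv (curvA γ) s = 0 := by
    have h := deriv_eq_zero_of_periodic_of_nonneg hL
      (F := fun t ↦ curvA γ t * deriv (curvA γ) t
        - 2 * S * ((γ t).1 * (deriv γ t).2 - (γ t).2 * (deriv γ t).1))
      (F' := fun t ↦ deriv (curvA γ) t ^ 2)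
      (fun t ↦ by simp only [hperκ t, periodic_deriv hperκ t, hper t, hperγ' t])
      (fun t ↦ by
        have h := ((hderiv hκ t).mul (hderiv hκ' t)).sub
          ((((dx t).mul (dy' t)).sub ((dy t).mul (dx' t))).const_mul (2 * S))
        refine h.congr_deriv ?_
        have := hrot t
        simp only [innerP] at this
        linear_combination -curvA γ t * this)
      (fun t ↦ sq_nonneg _) s
    exact pow_eq_zero_iff two_ne_zero |>.1 h
  obtain ⟨k, hk⟩ : ∃ k, ∀ s, curvA γ s = k :=
    ⟨curvA γ 0, fun s ↦ is_const_of_deriv_eq_zero (hκ.differentiable (by simp)) hκ'_zero s 0⟩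
  simp only [hk] at dx' dy'
  have hk0 : k ≠ 0 := by
    rintro rfl
    have h := deriv_eq_zero_of_periodic_of_nonneg hL
      (F := fun t ↦ (γ t).1 * (deriv γ t).1 + (γ t).2 * (deriv γ t).2) (F' := fun _ ↦ 1)
      (fun t ↦ by simp only [hper t, hperγ' t])
      (fun t ↦ by
        refine (((dx t).mul (dx' t)).add ((dy t).mul (dy' t))).congr_deriv ?_
        linear_combination hunit t)
      (fun _ ↦ zero_le_one) 0
    exact one_ne_zero h
  -- the centre of curvature `γ + ν / k` is constant
  have hconst {f : ℝ → ℝ} (hf : ∀ s, HasDerivAt f 0 s) (s : ℝ) : f s = f 0 :=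
    is_const_of_deriv_eq_zero (fun t ↦ (hf t).differentiableAt) (fun t ↦ (hf t).deriv) s 0
  have hcx := hconst (f := fun t ↦ (γ t).1 + (deriv γ t).2 / k) fun s ↦ by
    refine ((dx s).add ((dy' s).div_const k)).congr_deriv ?_
    field_simp
    ring
  have hcy := hconst (f := fun t ↦ (γ t).2 - (deriv γ t).1 / k) fun s ↦ by
    refine ((dy s).sub ((dx' s).div_const k)).congr_deriv ?_
    field_simp
    ring
  refine ⟨((γ 0).1 + (deriv γ 0).2 / k, (γ 0).2 - (deriv γ 0).1 / k), |1 / k|, by positivity,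
    fun s ↦ ?_⟩
  rw [← Real.sqrt_sq_eq_abs]
  congr 1
  simp only [← hcx s, ← hcy s]
  linear_combination (1 / k) ^ 2 * hunit s
end

section
/- Let γ : ℝ → ℝ² be a smooth regular plane curve parametrised by arc length with curvature κ, which is proper (the preimage of every compact subset of ℝ² is compact), and let S ∈ ℝ satisfy −κ''(s) = 2S ⟨γ'(s), γ(s)⟩ for all s. Suppose lim_{ρ→∞} ( ρ^{-2} ∫_{γ^{-1}(B_ρ(0))} κ(s)² ds + |S| ρ^{-1} ∫_{γ^{-1}(B_{2ρ}(0))} |⟨ν(s), γ(s)⟩| ds ) = 0, where B_ρ(0) is the closed ball of radius ρ centred at the origin in ℝ². Then γ is a straight line: γ(s) = γ(0) + s γ'(0) for all s. -/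
open Real MeasureTheory Filter

/-- The closed Euclidean ball of radius `ρ` centred at the origin in `ℝ × ℝ`. -/
def euclBall (ρ : ℝ) : Set (ℝ × ℝ) := {p : ℝ × ℝ | Real.sqrt (p.1 ^ 2 + p.2 ^ 2) ≤ ρ}

lemma isCompact_euclBall (R : ℝ) : IsCompact (euclBall R) := by
  refine Metric.isCompact_of_isClosed_isBounded ?_ ?_
  · exact isClosed_le (by fun_prop) continuous_const
  · refine (Metric.isBounded_closedBall (x := (0 : ℝ × ℝ)) (r := R)).subset fun p hp => ?_
    have hp' : Real.sqrt (p.1 ^ 2 + p.2 ^ 2) ≤ R := hp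
    rw [mem_closedBall_zero_iff, Prod.norm_def, Real.norm_eq_abs, Real.norm_eq_abs]
    exact max_le
      ((Real.abs_le_sqrt (by nlinarith [sq_nonneg p.2])).trans hp')
      ((Real.abs_le_sqrt (by nlinarith [sq_nonneg p.1])).trans hp')

lemma mem_euclBall_of_abs_add_abs_le {p : ℝ × ℝ} {R : ℝ} (h : |p.1| + |p.2| ≤ R) :
    p ∈ euclBall R := by
  refine Real.sqrt_le_iff.2 ⟨(by positivity : 0 ≤ |p.1| + |p.2|).trans h, ?_⟩
  have h₁ := abs_nonneg p.1
  have h₂ := abs_nonneg p.2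
  rw [← sq_abs p.1, ← sq_abs p.2]
  nlinarith

/-- A function whose derivative is eventually at least `δ > 0` grows at least linearly. -/
lemma eventually_linear_le_of_le_deriv {f f' : ℝ → ℝ} (hf : ∀ s, HasDerivAt f (f' s) s)
    {δ : ℝ} (hδ : 0 < δ) (h : ∀ᶠ s in atTop, δ ≤ f' s) :
    ∀ᶠ s in atTop, δ / 2 * s ≤ f s := by
  obtain ⟨a, ha⟩ := eventually_atTop.1 h
  have hlin : ∀ s, a ≤ s → δ * (s - a) ≤ f s - f a := fun s hs =>
    (convex_Ici a).mul_sub_le_image_sub_of_le_deriv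
      (fun t _ => (hf t).continuousAt.continuousWithinAt)
      (fun t _ => (hf t).differentiableAt.differentiableWithinAt)
      (fun t ht => by
        rw [interior_Ici] at ht
        rw [(hf t).deriv]
        exact ha t (le_of_lt ht))
      a Set.self_mem_Ici s hs hs
  filter_upwards [eventually_ge_atTop a, eventually_ge_atTop ((δ * a - f a) / (δ / 2))]
    with s hs hs'
  have h₁ := hlin s hs
  have h₂ := (div_le_iff₀ (by positivity)).1 hs'
  linarith

section Curve

variable {γ : ℝ → ℝ × ℝ}

lemma hasDerivAt_fst_snd {g : ℝ → ℝ × ℝ} {s : ℝ} (hg : DifferentiableAt ℝ g s) :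
    HasDerivAt (fun t => (g t).1) (deriv g s).1 s ∧
      HasDerivAt (fun t => (g t).2) (deriv g s).2 s :=
  ⟨hg.hasDerivAt.fst, hg.hasDerivAt.snd⟩

lemma norm_le_norm_zero_add_abs (hγ : Differentiable ℝ γ)
    (hunit : ∀ s, (deriv γ s).1 ^ 2 + (deriv γ s).2 ^ 2 = 1) (s : ℝ) :
    ‖γ s‖ ≤ ‖γ 0‖ + |s| := by
  have hbound : ∀ t ∈ (Set.univ : Set ℝ), ‖deriv γ t‖ ≤ 1 := fun t _ => by
    rw [Prod.norm_def, Real.norm_eq_abs, Real.norm_eq_abs]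
    refine max_le (abs_le_one_iff_mul_self_le_one.2 ?_) (abs_le_one_iff_mul_self_le_one.2 ?_)
    · nlinarith [hunit t, sq_nonneg (deriv γ t).2]
    · nlinarith [hunit t, sq_nonneg (deriv γ t).1]
  have h := convex_univ.norm_image_sub_le_of_norm_deriv_le (fun t _ => hγ t) hbound
    (Set.mem_univ 0) (Set.mem_univ s)
  rw [sub_zero, one_mul, Real.norm_eq_abs] at h
  linarith [norm_le_norm_add_norm_sub' (γ s) (γ 0)]

/-- For a proper curve the squared distance to the origin eventually exceeds any bound. -/
lemma eventually_lt_sq_add_sq (hproper : ∀ C : Set (ℝ × ℝ), IsCompact C → IsCompact (γ ⁻¹' C))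
    (M : ℝ) : ∀ᶠ s in atTop, M < (γ s).1 ^ 2 + (γ s).2 ^ 2 := by
  obtain ⟨b, hb⟩ := (hproper _ (isCompact_euclBall (Real.sqrt M))).bddAbove
  filter_upwards [eventually_gt_atTop b] with s hs
  by_contra! hM
  exact absurd (hb (show s ∈ γ ⁻¹' euclBall (Real.sqrt M) from Real.sqrt_le_sqrt hM))
    (not_le.2 hs)

/-- Linear growth of `f` makes `ρ ^ (-2) ∫ f ^ 2` over the preimages of balls unbounded. -/
lemma not_tendsto_zero_of_linear_growth (hγ : Differentiable ℝ γ)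
    (hunit : ∀ s, (deriv γ s).1 ^ 2 + (deriv γ s).2 ^ 2 = 1)
    (hproper : ∀ C : Set (ℝ × ℝ), IsCompact C → IsCompact (γ ⁻¹' C))
    {f : ℝ → ℝ} (hf : Continuous f) {δ : ℝ} (hδ : 0 < δ)
    (hgrow : ∀ᶠ s in atTop, δ * s ≤ |f s|) :
    ¬ Tendsto (fun ρ : ℝ => (1 / ρ ^ 2) * ∫ s in γ ⁻¹' (euclBall ρ), f s ^ 2) atTop (nhds 0) := by
  intro hlim
  obtain ⟨a, ha⟩ := eventually_atTop.1 hgrow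
  obtain ⟨ρ, hρ1, hρ0, hρa, hργ, hρδ⟩ := ((hlim.eventually_lt_const one_pos).and
    ((eventually_gt_atTop 0).and ((eventually_ge_atTop (8 * a)).and
      ((eventually_ge_atTop (4 * ‖γ 0‖)).and
        (eventually_ge_atTop (512 / δ ^ 2)))))).exists
  have hsub : Set.Icc (ρ / 8) (ρ / 4) ⊆ γ ⁻¹' euclBall ρ := fun s hs => by
    refine mem_euclBall_of_abs_add_abs_le ?_
    have h₁ := norm_le_norm_zero_add_abs hγ hunit s
    rw [abs_of_nonneg (by linarith [hs.1] : 0 ≤ s)] at h₁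
    have h₂ := norm_fst_le (γ s)
    have h₃ := norm_snd_le (γ s)
    rw [Real.norm_eq_abs] at h₂ h₃
    linarith [hs.2]
  have hint : IntegrableOn (fun s => f s ^ 2) (γ ⁻¹' euclBall ρ) :=
    (hf.pow 2).continuousOn.integrableOn_compact (hproper _ (isCompact_euclBall ρ))
  have hmono : ∫ s in Set.Icc (ρ / 8) (ρ / 4), f s ^ 2 ≤ ∫ s in γ ⁻¹' euclBall ρ, f s ^ 2 :=
    setIntegral_mono_set hint (ae_of_all _ fun s => sq_nonneg _) hsub.eventuallyLE
  have hconst : ∫ _ in Set.Icc (ρ / 8) (ρ / 4), (δ * (ρ / 8)) ^ 2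
      ≤ ∫ s in Set.Icc (ρ / 8) (ρ / 4), f s ^ 2 := by
    refine setIntegral_mono_on (integrableOn_const (by simp)) (hint.mono_set hsub) measurableSet_Icc fun s hs => ?_
    rw [← sq_abs (f s)]
    have h₁ := ha s (by linarith [hs.1])
    have h₂ : δ * (ρ / 8) ≤ δ * s := mul_le_mul_of_nonneg_left hs.1 hδ.le
    exact pow_le_pow_left₀ (by positivity) (h₂.trans h₁) 2
  rw [setIntegral_const, smul_eq_mul, Measure.real, Real.volume_Icc,
    ENNReal.toReal_ofReal (by linarith)] at hconst
  rw [one_div, inv_mul_lt_iff₀ (by positivity), mul_one] at hρ1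
  have h₁ := (div_le_iff₀ (by positivity)).1 hρδ
  nlinarith [mul_le_mul_of_nonneg_left h₁ (sq_nonneg ρ)]

/-- Frenet equations, `γ'' = κ ν`, in coordinates. -/
lemma deriv_deriv_eq_curvA (hT : Differentiable ℝ (deriv γ))
    (hunit : ∀ s, (deriv γ s).1 ^ 2 + (deriv γ s).2 ^ 2 = 1) (s : ℝ) :
    (deriv (deriv γ) s).1 = curvA γ s * (deriv γ s).2 ∧
      (deriv (deriv γ) s).2 = -(curvA γ s * (deriv γ s).1) := by
  obtain ⟨h₁, h₂⟩ := hasDerivAt_fst_snd (hT s)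
  have h := ((h₁.pow 2).add (h₂.pow 2)).unique
    ((hasDerivAt_const s (1 : ℝ)).congr_of_eventuallyEq (.of_forall hunit))
  have hs := hunit s
  simp only [curvA, innerP, nuA]
  norm_num at h
  generalize (deriv (deriv γ) s).1 = a at *
  generalize (deriv (deriv γ) s).2 = b at *
  generalize (deriv γ s).1 = u at *
  generalize (deriv γ s).2 = v at *
  constructor
  · linear_combination (-a) * hs + u / 2 * h
  · linear_combination (-b) * hs + v / 2 * h

/-- The first integral `κ' + S |γ|² = const` of the rotator equation. -/
lemma exists_deriv_curvA_eq (hγ : Differentiable ℝ γ)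
    (hκ : Differentiable ℝ (deriv (curvA γ))) {S : ℝ}
    (hrot : ∀ s, -(deriv (deriv (curvA γ)) s) = 2 * S * innerP (deriv γ s) (γ s)) :
    ∃ c, ∀ s, deriv (curvA γ) s = c - S * ((γ s).1 ^ 2 + (γ s).2 ^ 2) := by
  have hder : ∀ s, HasDerivAt
      (fun t => deriv (curvA γ) t + S * ((γ t).1 ^ 2 + (γ t).2 ^ 2)) 0 s := fun s => by
    obtain ⟨h₁, h₂⟩ := hasDerivAt_fst_snd (hγ s)
    refine ((hκ s).hasDerivAt.add (((h₁.pow 2).add (h₂.pow 2)).const_mul S)).congr_deriv ?_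
    have h := hrot s
    simp only [innerP] at h
    norm_num
    linear_combination -h
  refine ⟨_, fun s => eq_sub_of_add_eq (is_const_of_deriv_eq_zero
    (fun t => (hder t).differentiableAt) (fun t => (hder t).deriv) s 0)⟩

/-- A proper curve cannot have constant nonzero curvature. -/
lemma curvA_const_eq_zero (hγ : Differentiable ℝ γ) (hT : Differentiable ℝ (deriv γ))
    (hunit : ∀ s, (deriv γ s).1 ^ 2 + (deriv γ s).2 ^ 2 = 1)
    (hproper : ∀ C : Set (ℝ × ℝ), IsCompact C → IsCompact (γ ⁻¹' C))
    {d : ℝ} (hd : ∀ s, curvA γ s = d) : d = 0 := by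
  by_contra hne
  have hx : ∀ s, HasDerivAt (fun t => d * (γ t).1 + (deriv γ t).2) 0 s := fun s => by
    refine (((hasDerivAt_fst_snd (hγ s)).1.const_mul d).add
      (hasDerivAt_fst_snd (hT s)).2).congr_deriv ?_
    rw [(deriv_deriv_eq_curvA hT hunit s).2, hd]
    ring
  have hy : ∀ s, HasDerivAt (fun t => d * (γ t).2 - (deriv γ t).1) 0 s := fun s => by
    refine (((hasDerivAt_fst_snd (hγ s)).2.const_mul d).sub
      (hasDerivAt_fst_snd (hT s)).1).congr_deriv ?_
    rw [(deriv_deriv_eq_curvA hT hunit s).1, hd]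
    ring
  have hx0 := fun s => is_const_of_deriv_eq_zero
    (fun t => (hx t).differentiableAt) (fun t => (hx t).deriv) s 0
  have hy0 := fun s => is_const_of_deriv_eq_zero
    (fun t => (hy t).differentiableAt) (fun t => (hy t).deriv) s 0
  set p := d * (γ 0).1 + (deriv γ 0).2
  set q := d * (γ 0).2 - (deriv γ 0).1
  obtain ⟨s, hs⟩ := (eventually_lt_sq_add_sq hproper
    (2 * (p ^ 2 + q ^ 2 + 1) / d ^ 2)).exists
  rw [div_lt_iff₀ (by positivity)] at hs
  have h₁ : d * (γ s).1 = p - (deriv γ s).2 := eq_sub_of_add_eq (hx0 s)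
  have h₂ : d * (γ s).2 = q + (deriv γ s).1 := by linarith [hy0 s]
  have h₃ : ((γ s).1 ^ 2 + (γ s).2 ^ 2) * d ^ 2
      = (p - (deriv γ s).2) ^ 2 + (q + (deriv γ s).1) ^ 2 := by
    rw [← h₁, ← h₂]; ring
  nlinarith [hunit s, sq_nonneg (p + (deriv γ s).2), sq_nonneg (q - (deriv γ s).1)]

lemma eq_line_of_deriv_deriv_eq_zero (hγ : Differentiable ℝ γ) (hT : Differentiable ℝ (deriv γ))
    (h : ∀ s, deriv (deriv γ) s = 0) (s : ℝ) : γ s = γ 0 + s • deriv γ 0 := by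
  have hder : ∀ t, HasDerivAt (fun t => γ t - t • deriv γ 0) 0 t := fun t => by
    refine ((hγ t).hasDerivAt.sub ((hasDerivAt_id t).smul_const (deriv γ 0))).congr_deriv ?_
    rw [is_const_of_deriv_eq_zero hT h t 0, one_smul, sub_self]
  have h0 := is_const_of_deriv_eq_zero
    (fun t => (hder t).differentiableAt) (fun t => (hder t).deriv) s 0
  simp only [zero_smul, sub_zero] at h0
  exact sub_eq_iff_eq_add.1 h0

end Curve

/-- a proper open rotator for the curve diffusion flow satisfying the
integral growth condition is a straight line. -/
theorem proper_rotator_with_growth_is_line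
    (γ : ℝ → ℝ × ℝ)
    (hsmooth : ContDiff ℝ (⊤ : ℕ∞) γ)
    (hunit : ∀ s, (deriv γ s).1 ^ 2 + (deriv γ s).2 ^ 2 = 1)
    (hproper : ∀ C : Set (ℝ × ℝ), IsCompact C → IsCompact (γ ⁻¹' C))
    (S : ℝ)
    (hrot : ∀ s, -(deriv (deriv (curvA γ)) s) = 2 * S * innerP (deriv γ s) (γ s))
    (hgrowth : Filter.Tendsto (fun ρ : ℝ =>
        (1 / ρ ^ 2) * (∫ s in γ ⁻¹' (euclBall ρ), (curvA γ s) ^ 2)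
          + (|S| / ρ) * (∫ s in γ ⁻¹' (euclBall (2 * ρ)), |innerP (nuA γ s) (γ s)|))
      Filter.atTop (nhds 0)) :
    ∀ s, γ s = γ 0 + s • deriv γ 0 := by
  have hT : ContDiff ℝ (⊤ : ℕ∞) (deriv γ) := ((contDiff_infty_iff_deriv).1 hsmooth).2
  have hT' : ContDiff ℝ (⊤ : ℕ∞) (deriv (deriv γ)) := ((contDiff_infty_iff_deriv).1 hT).2
  have hκ : ContDiff ℝ (⊤ : ℕ∞) (curvA γ) :=
    (hT'.fst.mul hT.snd).add (hT'.snd.mul hT.fst.neg)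
  have hκ' : ContDiff ℝ (⊤ : ℕ∞) (deriv (curvA γ)) := ((contDiff_infty_iff_deriv).1 hκ).2
  have htop : ((⊤ : ℕ∞) : WithTop ℕ∞) ≠ 0 := by simp
  have dγ := hsmooth.differentiable htop
  have dT := hT.differentiable htop
  have dκ := hκ.differentiable htop
  have hκlim : Tendsto (fun ρ : ℝ =>
      (1 / ρ ^ 2) * ∫ s in γ ⁻¹' (euclBall ρ), (curvA γ s) ^ 2) atTop (nhds 0) := by
    refine squeeze_zero' (.of_forall fun ρ => ?_) ?_ hgrowth
    · exact mul_nonneg (by positivity) (integral_nonneg fun s => sq_nonneg _)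
    · filter_upwards [eventually_gt_atTop 0] with ρ hρ
      exact le_add_of_nonneg_right
        (mul_nonneg (by positivity) (integral_nonneg fun s => abs_nonneg _))
  obtain ⟨c, hc⟩ := exists_deriv_curvA_eq dγ (hκ'.differentiable htop) hrot
  have not_pos : ∀ δ > 0, ¬ ∀ᶠ s in atTop, δ ≤ deriv (curvA γ) s := fun δ hδ h =>
    not_tendsto_zero_of_linear_growth dγ hunit hproper hκ.continuous (half_pos hδ)
      ((eventually_linear_le_of_le_deriv (fun s => (dκ s).hasDerivAt) hδ h).mono
        fun s hs => hs.trans (le_abs_self _)) hκlim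
  have not_neg : ∀ δ > 0, ¬ ∀ᶠ s in atTop, δ ≤ -deriv (curvA γ) s := fun δ hδ h =>
    not_tendsto_zero_of_linear_growth dγ hunit hproper hκ.continuous (half_pos hδ)
      ((eventually_linear_le_of_le_deriv (fun s => (dκ s).hasDerivAt.neg) hδ h).mono
        fun s hs => hs.trans (neg_le_abs _)) hκlim
  have hS : S = 0 := by
    rcases lt_trichotomy S 0 with hS | hS | hS
    · refine absurd ?_ (not_pos 1 one_pos)
      filter_upwards [eventually_lt_sq_add_sq hproper ((1 - c) / -S)] with s hs
      rw [div_lt_iff₀ (by linarith)] at hs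
      rw [hc]
      linarith
    · exact hS
    · refine absurd ?_ (not_neg 1 one_pos)
      filter_upwards [eventually_lt_sq_add_sq hproper ((1 + c) / S)] with s hs
      rw [div_lt_iff₀ hS] at hs
      rw [hc]
      linarith
  simp only [hS, zero_mul, sub_zero] at hc
  have hc0 : c = 0 := by
    rcases lt_trichotomy c 0 with h | h | h
    · exact absurd (.of_forall fun s => by rw [hc]) (not_neg (-c) (by linarith))
    · exact h
    · exact absurd (.of_forall fun s => by rw [hc]) (not_pos c h)
  have hconst : ∀ s, curvA γ s = curvA γ 0 := fun s =>
    is_const_of_deriv_eq_zero dκ (fun t => (hc t).trans hc0) s 0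
  have hzero : ∀ s, curvA γ s = 0 := fun s =>
    (hconst s).trans (curvA_const_eq_zero dγ dT hunit hproper hconst)
  refine eq_line_of_deriv_deriv_eq_zero dγ dT fun s => ?_
  obtain ⟨h₁, h₂⟩ := deriv_deriv_eq_curvA dT hunit s
  refine Prod.ext ?_ ?_
  · simp [h₁, hzero]
  · simp [h₂, hzero]
end
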